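/- Let D_1, D_2, D_3, D_4 be the four chord diagrams of order n obtained from a common configuration as described. For every set A of chords of the common configuration with c ∉ A and c' ∉ A (regarding A as a set of chords of each D_i), the genera of the corresponding partial duals satisfy g_A(D_1) = g_A(D_4) and g_A(D_2) = g_A(D_3). -/

import Mathlib

/-- Number of cycles (orbits, counting fixed points) of a self-map:
the number of connected components of its functional graph. For a permutation
this is the number of cycles, counting fixed points. -/
noncomputable def cycles {α : Type*} (f : α → α) : ℕ :=
  Nat.card (Quot fun i j => f i = j)

-- `restrictTo σ A` agrees with `σ` on `A` and fixes everything else.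
-- If `A` is the set of endpoints of a set of chords of `σ`, this is `σ_A`.
open Classical in
noncomputable def restrictTo {α : Type*} (f : α → α) (A : Set α) : α → α :=
  fun i => if i ∈ A then f i else i

/-- The rotation `i ↦ i + 1` of the `2n` points of a chord diagram. -/
def rot (n : ℕ) : ZMod (2 * n) → ZMod (2 * n) := fun i => i + 1

/-- Genus of the partial dual of the chord diagram `σ` relative to the set of
chords whose endpoint set is the (`σ`-invariant) set `A`. -/
noncomputable def pdGenus (n : ℕ) (σ : ZMod (2 * n) → ZMod (2 * n))
    (A : Set (ZMod (2 * n))) : ℕ :=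
  (n + 2 - cycles (rot n ∘ restrictTo σ A) - cycles (rot n ∘ restrictTo σ Aᶜ)) / 2

/-- Genus of the one-vertex ribbon graph of the chord diagram `σ`. -/
noncomputable def genus (n : ℕ) (σ : ZMod (2 * n) → ZMod (2 * n)) : ℕ :=
  (n + 1 - cycles (rot n ∘ σ)) / 2

/-- The partial-dual genus polynomial `∂Γ_σ(z) = Σ_A z^{g_A(σ)}`, the sum being
over all sets `A` of chords of `σ` (encoded as `σ`-invariant subsets of the
`2n` points). -/
noncomputable def pdPoly (n : ℕ) (σ : ZMod (2 * n) → ZMod (2 * n)) : Polynomial ℤ :=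
  if h : n = 0 then 1 else
    haveI : NeZero (2 * n) := ⟨by omega⟩
    ∑ A ∈ Finset.univ.filter (fun A : Finset (ZMod (2 * n)) => ∀ i ∈ A, σ i ∈ A),
      Polynomial.X ^ pdGenus n σ (↑A : Set (ZMod (2 * n)))

/-- `φ : ZMod (2n-1) → ZMod (2n)` is the cyclic-order-preserving identification of
the `2n-1` configuration points with the complement of the inserted point `x`:
it avoids `x` and each step advances by one position on the circle, skipping `x`. -/
def IsInsertion {m N : ℕ} (φ : ZMod m → ZMod N) (x : ZMod N) : Prop :=
  φ 0 ≠ x ∧ ∀ j, φ (j + 1) = if φ j + 1 = x then φ j + 2 else φ j + 1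

/-- A configuration of `2n-1` marked points on the circle: a distinguished chord
`c = {p, q}`, a distinguished unpaired point `u`, and a fixed-point-free pairing
of the remaining `2n-4` points into background chords; all encoded by the
involution `τ` whose unique fixed point is `u` and with `τ p = q`. -/
def IsConfig (n : ℕ) (τ : ZMod (2 * n - 1) → ZMod (2 * n - 1))
    (p q u : ZMod (2 * n - 1)) : Prop :=
  Function.Involutive τ ∧ τ p = q ∧ p ≠ q ∧ τ u = u ∧ ∀ j, τ j = j → j = u

/-- `D` is the chord diagram of order `n` obtained from the configuration `τ`
by inserting the extra point `x` (via the order-preserving identification `φ`)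
together with the new chord `c' = {x, u}`; all other chords are unchanged. -/
def IsInsertedDiagram (n : ℕ) (τ : ZMod (2 * n - 1) → ZMod (2 * n - 1))
    (u : ZMod (2 * n - 1)) (φ : ZMod (2 * n - 1) → ZMod (2 * n)) (x : ZMod (2 * n))
    (D : ZMod (2 * n) → ZMod (2 * n)) : Prop :=
  IsInsertion φ x ∧ (∀ j, j ≠ u → D (φ j) = φ (τ j)) ∧ D (φ u) = x ∧ D x = φ u

/-- Mutually inverse maps up to connectedness give equal numbers of components. -/
lemma cycles_congr {α β : Type*} (f : α → α) (g : β → β) (F : α → β) (G : β → α)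
    (hF : ∀ a, Quot.mk (fun i j => g i = j) (F (f a)) = Quot.mk _ (F a))
    (hG : ∀ b, Quot.mk (fun i j => f i = j) (G (g b)) = Quot.mk _ (G b))
    (hGF : ∀ a, Quot.mk (fun i j => f i = j) (G (F a)) = Quot.mk _ a)
    (hFG : ∀ b, Quot.mk (fun i j => g i = j) (F (G b)) = Quot.mk _ b) :
    cycles f = cycles g := by
  unfold cycles
  refine Nat.card_congr ⟨Quot.lift (fun a => Quot.mk _ (F a)) ?_,
    Quot.lift (fun b => Quot.mk _ (G b)) ?_, ?_, ?_⟩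
  · rintro a _ rfl; exact (hF a).symm
  · rintro a _ rfl; exact (hG a).symm
  · rintro ⟨a⟩; exact hGF a
  · rintro ⟨a⟩; exact hFG a

lemma mk_step {α : Type*} (f : α → α) (a : α) :
    Quot.mk (fun i j => f i = j) (f a) = Quot.mk _ a :=
  (Quot.sound (r := fun i j => f i = j) (a := a) (b := f a) rfl).symm

lemma cycles_conj {α β : Type*} (f : α → α) (g : β → β) (e : α → β)
    (he : Function.Bijective e) (h : ∀ a, g (e a) = e (f a)) : cycles f = cycles g := by
  let E := Equiv.ofBijective e he
  have hE : ∀ a, E a = e a := fun _ => rfl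
  refine cycles_congr f g E E.symm (fun a => ?_) (fun b => ?_) (by simp) (by simp)
  · rw [hE, ← h, mk_step]; rfl
  · obtain ⟨a, rfl⟩ := E.surjective b
    have : g (E a) = E (f a) := h a
    rw [this, E.symm_apply_apply, E.symm_apply_apply, mk_step]

/-- Rotation after inserting a point `none` directly after `s`. -/
def rotIns {m : ℕ} (s : ZMod m) : Option (ZMod m) → Option (ZMod m)
  | none => some (s + 1)
  | some j => if j = s then none else some (j + 1)

/-- The pairing with the new chord `{none, u}`. -/
def pairIns {m : ℕ} (t : ZMod m → ZMod m) (u : ZMod m) : Option (ZMod m) → Option (ZMod m)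
  | none => some u
  | some j => if j = u then none else some (t j)

lemma cycles_fixed {m : ℕ} (s : ZMod m) (t : ZMod m → ZMod m) :
    cycles (rotIns s ∘ Option.map t) = cycles (fun j => t j + 1) := by
  refine cycles_congr _ _ (fun o => o.getD (s + 1)) some ?_ ?_ ?_ ?_
  · rintro (_ | j)
    · simp [rotIns]
    · by_cases h : t j = s
      · simpa [rotIns, h] using mk_step (fun j => t j + 1) j
      · simpa [rotIns, h] using mk_step (fun j => t j + 1) j
  · intro j
    by_cases h : t j = s
    · have h1 := mk_step (rotIns s ∘ Option.map t) (some j)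
      have h2 := mk_step (rotIns s ∘ Option.map t) none
      simp only [Function.comp, Option.map, rotIns, h, if_true] at h1 h2
      simp only [h]
      exact h2.trans h1
    · have h1 := mk_step (rotIns s ∘ Option.map t) (some j)
      simp only [Function.comp, Option.map, rotIns, h, if_false] at h1
      exact h1
  · rintro (_ | j)
    · exact mk_step (rotIns s ∘ Option.map t) none
    · rfl
  · intro j; rfl

lemma cycles_swap {m : ℕ} (t : ZMod m → ZMod m) (p q u : ZMod m)
    (ht : Function.Involutive t) (hp : t p = q) (hpq : p ≠ q) (hu : t u = u) :
    cycles (rotIns (p - 1) ∘ pairIns t u) = cycles (rotIns q ∘ pairIns t u) := by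
  have hq : t q = p := by rw [← hp, ht]
  have hup : u ≠ p := by rintro rfl; exact hpq (hu.symm.trans hp)
  have huq : u ≠ q := by rintro rfl; exact hpq (hq.symm.trans hu)
  have h1 := fun j => ht.injective.eq_iff (a := j) (b := p)
  have h2 : ∀ j, j + 1 = p ↔ j = p - 1 := fun j => eq_sub_iff_add_eq.symm
  have hps : p - 1 + 1 = p := by ring
  set f := rotIns (p - 1) ∘ pairIns t u with hf
  set g := rotIns q ∘ pairIns t u with hg
  have mf := mk_step f
  have mg := mk_step g
  have f0 : f none = if u = p - 1 then none else some (u + 1) := rfl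
  have g0 : g none = some (u + 1) := by simp [hg, pairIns, rotIns, huq]
  have fu : f (some u) = some p := by simp [hf, pairIns, rotIns]
  have gu : g (some u) = some (q + 1) := by simp [hg, pairIns, rotIns]
  have fp : f (some p) = if q = p - 1 then none else some (q + 1) := by
    simp [hf, pairIns, rotIns, hup.symm, hp]
  have gp : g (some p) = none := by simp [hg, pairIns, rotIns, hup.symm, hp]
  have fj : ∀ j, j ≠ u → f (some j) = if t j = p - 1 then none else some (t j + 1) := by
    intro j hj; simp [hf, pairIns, rotIns, hj]
  have gj : ∀ j, j ≠ u → j ≠ p → g (some j) = some (t j + 1) := by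
    intro j hj hjp
    have : t j ≠ q := by rw [← hp]; exact fun h => hjp (ht.injective h)
    simp [hg, pairIns, rotIns, hj, this]
  clear_value f g
  refine cycles_congr f g (fun o => if o = some p then some u else o)
    (fun o => if o = some p then none else o) ?_ ?_ ?_ ?_
  · rintro (_ | j)
    · grind
    · by_cases hj : j = u
      · grind
      · by_cases hjp : j = p <;> grind
  · rintro (_ | j)
    · grind
    · by_cases hj : j = u
      · grind
      · by_cases hjp : j = p <;> grind
  · rintro (_ | j)
    · grind
    · by_cases hjp : j = p <;> grind
  · rintro (_ | j)
    · grind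
    · by_cases hjp : j = p <;> grind

/-- Transport to the model on `Option (ZMod m)`. -/
lemma transport (n : ℕ) (hn : 2 ≤ n)
    (τ : ZMod (2 * n - 1) → ZMod (2 * n - 1)) (u s : ZMod (2 * n - 1))
    (φ : ZMod (2 * n - 1) → ZMod (2 * n)) (x : ZMod (2 * n)) (D : ZMod (2 * n) → ZMod (2 * n))
    (h : IsInsertedDiagram n τ u φ x D) (hx : x = φ s + 1)
    (B : Set (ZMod (2 * n - 1))) (hu : u ∉ B) :
    cycles (rot n ∘ restrictTo D (φ '' B)) = cycles (rotIns s ∘ Option.map (restrictTo τ B)) ∧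
    cycles (rot n ∘ restrictTo D (φ '' B)ᶜ) = cycles (rotIns s ∘ pairIns (restrictTo τ Bᶜ) u) := by
  classical
  have : NeZero (2 * n) := ⟨by omega⟩
  have : NeZero (2 * n - 1) := ⟨by omega⟩
  have : Fact (1 < 2 * n) := ⟨by omega⟩
  obtain ⟨⟨h0, hstep⟩, hD, hDu, hDx⟩ := h
  have hne : ∀ j, φ j ≠ x := by
    have : ∀ k : ℕ, φ (k : ZMod (2 * n - 1)) ≠ x := by
      intro k
      induction k with
      | zero => simpa using h0
      | succ k ih =>
        push_cast
        rw [hstep]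
        split_ifs with hk
        · intro hk2
          have : φ (k : ZMod (2 * n - 1)) + 1 = φ (k : ZMod (2 * n - 1)) + 2 := hk.trans hk2.symm
          have h12 : (1 : ZMod (2 * n)) = 2 := add_left_cancel this
          have : (1 : ZMod (2 * n)) = 0 := by linear_combination -h12
          exact one_ne_zero this
        · exact hk
    intro j
    have := this j.val
    rwa [ZMod.natCast_zmod_val] at this
  let e : Option (ZMod (2 * n - 1)) → ZMod (2 * n) := fun o => o.elim x φ
  have e0 : e none = x := rfl
  have e1 : ∀ j, e (some j) = φ j := fun _ => rfl
  have hs1 : φ (s + 1) = x + 1 := by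
    rw [hstep, if_pos hx.symm, hx]; ring
  have hsurj : Function.Surjective e := by
    have : ∀ k : ℕ, ∃ o, e o = x + (k : ZMod (2 * n)) := by
      intro k
      induction k with
      | zero => exact ⟨none, by simp [e0]⟩
      | succ k ih =>
        obtain ⟨o, ho⟩ := ih
        push_cast
        rw [← add_assoc, ← ho]
        rcases o with _ | j
        · exact ⟨some (s + 1), by rw [e1, hs1, e0]⟩
        · by_cases hj : φ j + 1 = x
          · exact ⟨none, by rw [e1, hj, e0]⟩
          · exact ⟨some (j + 1), by rw [e1, hstep, if_neg hj, e1]⟩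
    intro y
    obtain ⟨o, ho⟩ := this (y - x).val
    exact ⟨o, by rw [ho, ZMod.natCast_zmod_val]; ring⟩
  have hbij : Function.Bijective e := by
    rw [Fintype.bijective_iff_surjective_and_card]
    refine ⟨hsurj, ?_⟩
    rw [Fintype.card_option, ZMod.card, ZMod.card]; omega
  have hinj : Function.Injective φ := fun a b hab => by
    have := hbij.1 (a₁ := some a) (a₂ := some b) hab
    simpa using this
  have hrot : ∀ o, rot n (e o) = e (rotIns s o) := by
    rintro (_ | j)
    · simp only [rotIns, e0, e1, hs1, rot]
    · by_cases hj : j = s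
      · simp only [rotIns, e0, e1, rot, hj, if_true, hx]
      · have : φ j + 1 ≠ x := by
          rw [hx]; exact fun h => hj (hinj (add_right_cancel h))
        simp only [rotIns, e1, rot, hj, if_false]
        rw [hstep, if_neg this]
  have hmem : ∀ j, φ j ∈ φ '' B ↔ j ∈ B := fun j => hinj.mem_set_image
  have hxB : x ∉ φ '' B := by rintro ⟨j, -, hj⟩; exact hne j hj
  constructor
  · symm
    refine cycles_conj _ _ e hbij fun o => ?_
    simp only [Function.comp]
    rw [← hrot]
    congr 1
    rcases o with _ | j
    · simp [restrictTo, e0, hxB]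
    · by_cases hj : j ∈ B
      · have : j ≠ u := fun h => hu (h ▸ hj)
        simp only [restrictTo, e1, hmem, hj, if_true, Option.map, hD j this]
      · simp only [restrictTo, e1, hmem, hj, if_false, Option.map]
  · symm
    refine cycles_conj _ _ e hbij fun o => ?_
    simp only [Function.comp]
    rw [← hrot]
    congr 1
    rcases o with _ | j
    · simp [restrictTo, e0, e1, hxB, pairIns, hDx]
    · by_cases hju : j = u
      · subst hju
        simp [restrictTo, e0, e1, hmem, hu, pairIns, hDu]
      · by_cases hj : j ∈ B
        · simp [restrictTo, e1, hmem, hj, hju, pairIns]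
        · simp [restrictTo, e1, hmem, hj, hju, pairIns, hD j hju]

lemma before_to_after {m N : ℕ} (φ : ZMod m → ZMod N) (x : ZMod N) (p : ZMod m)
    (hne : φ (p - 1) ≠ x)
    (h : IsInsertion φ x) (hx : x + 1 = φ p) : x = φ (p - 1) + 1 := by
  have h1 := h.2 (p - 1)
  rw [sub_add_cancel] at h1
  split_ifs at h1 with h2
  · exact h2.symm
  · exact absurd (add_right_cancel (h1.symm.trans hx.symm)) hne

lemma insertion_ne {m N : ℕ} [NeZero m] [Fact (1 < N)] (φ : ZMod m → ZMod N) (x : ZMod N)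
    (h : IsInsertion φ x) (j : ZMod m) : φ j ≠ x := by
  have : ∀ k : ℕ, φ (k : ZMod m) ≠ x := by
    intro k
    induction k with
    | zero => simpa using h.1
    | succ k ih =>
      push_cast
      rw [h.2]
      split_ifs with hk
      · intro hk2
        have h12 : (1 : ZMod N) = 2 := add_left_cancel (hk.trans hk2.symm)
        have : (1 : ZMod N) = 0 := by linear_combination -h12
        exact one_ne_zero this
      · exact hk
  have := this j.val
  rwa [ZMod.natCast_zmod_val] at this

lemma pdGenus_pair (n : ℕ) (hn : 2 ≤ n)
    (τ : ZMod (2 * n - 1) → ZMod (2 * n - 1)) (p q u : ZMod (2 * n - 1))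
    (hτ : Function.Involutive τ) (hpq : τ p = q) (hne : p ≠ q) (hu : τ u = u)
    (φ φ' : ZMod (2 * n - 1) → ZMod (2 * n)) (x x' : ZMod (2 * n))
    (D D' : ZMod (2 * n) → ZMod (2 * n))
    (h : IsInsertedDiagram n τ u φ x D) (hx : x + 1 = φ p)
    (h' : IsInsertedDiagram n τ u φ' x' D') (hx' : x' = φ' q + 1)
    (B : Set (ZMod (2 * n - 1))) (hB : ∀ j ∈ B, τ j ∈ B)
    (hc : p ∉ B) (hc' : u ∉ B) :
    pdGenus n D (φ '' B) = pdGenus n D' (φ' '' B) := by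
  classical
  have : NeZero (2 * n - 1) := ⟨by omega⟩
  have : Fact (1 < 2 * n) := ⟨by omega⟩
  have hxs := before_to_after φ x p (insertion_ne φ x h.1 _) h.1 hx
  obtain ⟨a1, a2⟩ := transport n hn τ u (p - 1) φ x D h hxs B hc'
  obtain ⟨b1, b2⟩ := transport n hn τ u q φ' x' D' h' hx' B hc'
  have hswap := cycles_swap (restrictTo τ Bᶜ) p q u ?_ ?_ hne ?_
  · unfold pdGenus
    rw [a1, a2, b1, b2, cycles_fixed, cycles_fixed, hswap]
  · intro j
    by_cases hj : j ∈ B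
    · simp [restrictTo, hj]
    · have : τ j ∉ B := fun h => hj (by simpa [hτ j] using hB _ h)
      simp [restrictTo, hj, this, hτ j]
  · simp [restrictTo, hc, hpq]
  · simp [restrictTo, hc', hu]

/-- For a set `A` of chords of the common configuration containing neither `c`
nor `c'`, the partial duals satisfy `g_A(D₁) = g_A(D₄)` and `g_A(D₂) = g_A(D₃)`. -/
theorem pdGenus_eq_of_not_c_not_c' (n : ℕ) (hn : 2 ≤ n)
    (τ : ZMod (2 * n - 1) → ZMod (2 * n - 1)) (p q u : ZMod (2 * n - 1))
    (hτ : IsConfig n τ p q u)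
    (φ₁ φ₂ φ₃ φ₄ : ZMod (2 * n - 1) → ZMod (2 * n))
    (x₁ x₂ x₃ x₄ : ZMod (2 * n))
    (D₁ D₂ D₃ D₄ : ZMod (2 * n) → ZMod (2 * n))
    (h₁ : IsInsertedDiagram n τ u φ₁ x₁ D₁) (hx₁ : x₁ + 1 = φ₁ p)
    (h₂ : IsInsertedDiagram n τ u φ₂ x₂ D₂) (hx₂ : x₂ = φ₂ p + 1)
    (h₃ : IsInsertedDiagram n τ u φ₃ x₃ D₃) (hx₃ : x₃ + 1 = φ₃ q)
    (h₄ : IsInsertedDiagram n τ u φ₄ x₄ D₄) (hx₄ : x₄ = φ₄ q + 1)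
    (B : Set (ZMod (2 * n - 1))) (hB : ∀ j ∈ B, τ j ∈ B)
    (hc : p ∉ B) (hc' : u ∉ B) :
    pdGenus n D₁ (φ₁ '' B) = pdGenus n D₄ (φ₄ '' B) ∧
    pdGenus n D₂ (φ₂ '' B) = pdGenus n D₃ (φ₃ '' B) := by
  obtain ⟨hi, hpq, hne, hu, -⟩ := hτ
  have hqp : τ q = p := by rw [← hpq, hi]
  have hq : q ∉ B := fun h => hc (hqp ▸ hB q h)
  exact ⟨pdGenus_pair n hn τ p q u hi hpq hne hu φ₁ φ₄ x₁ x₄ D₁ D₄ h₁ hx₁ h₄ hx₄ B hB hc hc',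
    (pdGenus_pair n hn τ q p u hi hqp hne.symm hu φ₃ φ₂ x₃ x₂ D₃ D₂ h₃ hx₃ h₂ hx₂ B hB hq
      hc').symm⟩
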